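/- arXiv:1604.02558 — 3 statements merged into one kernel-verified Lean document; each statement's English description precedes it below -/
import Mathlib

section
/- Let θ ∈ C²([a,b],ℝ) satisfy θ''(s) + V'(θ(s)) = 0 for all s ∈ [a,b], let c ∈ (a,b) be the unique point of [a,b] with θ'(c) = 0, and assume V'(θ(c)) ≠ 0. For d ∈ [a,b] with d ≠ c define μ'(s;d) = 1/θ'(s) + θ''(s)·∫_d^s (1/θ'(t)²) dt. Suppose μ'(s;a) tends to a real limit Lₐ as s → c⁻ and μ'(s;b) tends to a real limit L_b as s → c⁺. If θ'(a)·Lₐ > θ'(a)·L_b, then there exists k > 0 such that ∫_a^b (τ'(s)² − V''(θ(s))·τ(s)²) ds ≥ k·∫_a^b τ(s)² ds for every τ ∈ C¹([a,b],ℝ) with τ(a) = τ(b) = 0. If θ'(a)·Lₐ < θ'(a)·L_b, then there exists a Dirichlet-admissible perturbation τ with ∫_a^b (τ'(s)² − V''(θ(s))·τ(s)²) ds < 0. -/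
/-!
By reduction of order the Jacobi field `w = θ'` yields the Jacobi fields `μ(·; d) = w ∫_d 1 / w²`
for `d = a, b`. They vanish at `a` and `b` and meet at the zero `c` of `w` with common value
`-1 / w' c` and slopes `La` and `Lb`, so that the sign of the slope jump at `c` decides stability.

If the jump is favourable, adding a small multiple of `w` to each field removes its remaining zero;
the logarithmic derivatives then solve the Riccati equation, and completing the square bounds the
second variation from below. If it is unfavourable, the broken field has second variation
`-(La - Lb) / w' c < 0`, and its corner can be rounded at arbitrarily small cost.
-/

open Set Filter Topology MeasureTheory

section

/-- `f` is `C¹` on `s` with derivative `f'`. The derivative is only demanded in the interior, where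
it is two-sided; at the endpoints of an interval continuity makes `f'` the one-sided derivative. -/
structure IsC1On (f f' : ℝ → ℝ) (s : Set ℝ) : Prop where
  continuousOn : ContinuousOn f s
  continuousOn_deriv : ContinuousOn f' s
  hasDerivAt : ∀ x ∈ interior s, HasDerivAt f (f' x) x

/-- `y`, with derivative `y'`, solves the Jacobi equation `y'' + q y = 0` on `s`. -/
structure IsJacobiField (q y y' : ℝ → ℝ) (s : Set ℝ) : Prop extends IsC1On y y' s where
  hasDerivAt_deriv : ∀ x ∈ interior s, HasDerivAt y' (-(q x * y x)) x

/-- The second variation `∫ (τ'² - q τ²)` over `[a, b]`, for a perturbation `τ` with derivative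
`τ'`. -/
noncomputable def secondVariation (q τ τ' : ℝ → ℝ) (a b : ℝ) : ℝ :=
  ∫ s in a..b, (τ' s ^ 2 - q s * τ s ^ 2)

variable {q f f' g g' y y' z z' w w' τ τ' : ℝ → ℝ} {s t : Set ℝ} {a b c d k L La Lb ε η : ℝ}

namespace IsC1On

theorem of_hasDerivAt (hf : ∀ x ∈ s, HasDerivAt f (f' x) x) (hf' : ContinuousOn f' s) :
    IsC1On f f' s :=
  ⟨HasDerivAt.continuousOn hf, hf', fun x hx => hf x (interior_subset hx)⟩

theorem mono (hf : IsC1On f f' s) (hts : t ⊆ s) : IsC1On f f' t :=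
  ⟨hf.continuousOn.mono hts, hf.continuousOn_deriv.mono hts,
    fun x hx => hf.hasDerivAt x (interior_mono hts hx)⟩

theorem add_const_mul (hf : IsC1On f f' s) (hg : IsC1On g g' s) (ε : ℝ) :
    IsC1On (fun x => f x + ε * g x) (fun x => f' x + ε * g' x) s :=
  ⟨hf.continuousOn.add (hg.continuousOn.const_mul ε),
    hf.continuousOn_deriv.add (hg.continuousOn_deriv.const_mul ε),
    fun x hx => (hf.hasDerivAt x hx).add ((hg.hasDerivAt x hx).const_mul ε)⟩

theorem integral_deriv_eq_sub (hf : IsC1On f f' (Icc a b)) (hab : a ≤ b) :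
    ∫ x in a..b, f' x = f b - f a :=
  intervalIntegral.integral_eq_sub_of_hasDerivAt_of_le hab hf.continuousOn
    (fun x hx => hf.hasDerivAt x (by rwa [interior_Icc]))
    (hf.continuousOn_deriv.intervalIntegrable_of_Icc hab)

theorem continuousOn_secondVariation (hτ : IsC1On τ τ' s) (hq : ContinuousOn q s) :
    ContinuousOn (fun x => τ' x ^ 2 - q x * τ x ^ 2) s :=
  (hτ.continuousOn_deriv.pow 2).sub (hq.mul (hτ.continuousOn.pow 2))

theorem secondVariation_add_adjacent (hτ : IsC1On τ τ' (Icc a b)) (hq : ContinuousOn q (Icc a b))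
    (hc : c ∈ Icc a b) :
    secondVariation q τ τ' a c + secondVariation q τ τ' c b = secondVariation q τ τ' a b := by
  have hcont := hτ.continuousOn_secondVariation hq
  exact intervalIntegral.integral_add_adjacent_intervals
    ((hcont.mono (Icc_subset_Icc_right hc.2)).intervalIntegrable_of_Icc hc.1)
    ((hcont.mono (Icc_subset_Icc_left hc.1)).intervalIntegrable_of_Icc hc.2)

theorem exists_hasDerivAt_eqOn_of_eq (hf : IsC1On f f' (Icc a c)) (hg : IsC1On g g' (Icc c b))
    (hac : a ≤ c) (hcb : c ≤ b) (h : f c = g c) (h' : f' c = g' c) :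
    ∃ τ τ' : ℝ → ℝ, (∀ x, HasDerivAt τ (τ' x) x) ∧ Continuous τ' ∧
      EqOn τ f (Icc a c) ∧ EqOn τ' f' (Icc a c) ∧ EqOn τ g (Icc c b) ∧ EqOn τ' g' (Icc c b) := by
  let left := IccExtend hac ((Icc a c).domRestrict f')
  let right := IccExtend hcb ((Icc c b).domRestrict g')
  let τ' : ℝ → ℝ := fun x => if x ≤ c then left x else right x
  have hleft : EqOn left f' (Icc a c) := fun x hx => IccExtend_of_mem hac _ hx
  have hright : EqOn right g' (Icc c b) := fun x hx => IccExtend_of_mem hcb _ hx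
  have hmatch : left c = right c := by
    rw [hleft (right_mem_Icc.2 hac), hright (left_mem_Icc.2 hcb), h']
  have hτ' : Continuous τ' :=
    Continuous.if_le hf.continuousOn_deriv.domRestrict.Icc_extend'
      hg.continuousOn_deriv.domRestrict.Icc_extend' continuous_id continuous_const
      (by rintro x rfl; exact hmatch)
  have hτf' : EqOn τ' f' (Icc a c) := fun x hx => (if_pos hx.2).trans (hleft hx)
  have hτg' : EqOn τ' g' (Icc c b) := fun x hx => by
    rcases hx.1.eq_or_lt with rfl | hcx
    · exact (if_pos le_rfl).trans (hmatch.trans (hright hx))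
    · exact (if_neg hcx.not_ge).trans (hright hx)
  refine ⟨fun x => f c + ∫ t in c..x, τ' t, τ',
    fun x => (hτ'.integral_hasStrictDerivAt c x).hasDerivAt.const_add _, hτ', fun x hx => ?_, hτf',
    fun x hx => ?_, hτg'⟩
  · have hsub : Icc x c ⊆ Icc a c := Icc_subset_Icc_left hx.1
    have hint : ∫ t in x..c, τ' t = f c - f x := by
      rw [← (hf.mono hsub).integral_deriv_eq_sub hx.2]
      exact intervalIntegral.integral_congr (hτf'.mono (by rwa [uIcc_of_le hx.2]))
    simp only [intervalIntegral.integral_symm x c, hint]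
    ring
  · have hsub : Icc c x ⊆ Icc c b := Icc_subset_Icc_right hx.2
    have hint : ∫ t in c..x, τ' t = g x - g c := by
      rw [← (hg.mono hsub).integral_deriv_eq_sub hx.1]
      exact intervalIntegral.integral_congr (hτg'.mono (by rwa [uIcc_of_le hx.1]))
    simp only [hint, h]
    ring

end IsC1On

theorem secondVariation_congr (hab : a ≤ b) (hf : EqOn f g (Icc a b)) (hf' : EqOn f' g' (Icc a b)) :
    secondVariation q f f' a b = secondVariation q g g' a b :=
  intervalIntegral.integral_congr fun x hx => by
    rw [uIcc_of_le hab] at hx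
    simp only [hf hx, hf' hx]

theorem IsC1On.le_secondVariation_of_riccati {P P' : ℝ → ℝ} (hτ : IsC1On τ τ' (Icc a b))
    (hab : a ≤ b) (hq : ContinuousOn q (Icc a b)) (hP : ContinuousOn P (Icc a b))
    (hP' : ∀ x ∈ Ioo a b, HasDerivAt P (P' x) x)
    (hRiccati : ∀ x ∈ Ioo a b, P' x + P x ^ 2 + q x ≤ -k) :
    P b * τ b ^ 2 - P a * τ a ^ 2 + k * ∫ x in a..b, τ x ^ 2 ≤ secondVariation q τ τ' a b := by
  have hτsq : ContinuousOn (fun x => τ x ^ 2) (Icc a b) := hτ.continuousOn.pow 2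
  have hform := hτ.continuousOn_secondVariation hq
  have hkτsq : ContinuousOn (fun x => k * τ x ^ 2) (Icc a b) := continuousOn_const.mul hτsq
  have hbound : P b * τ b ^ 2 - P a * τ a ^ 2 ≤
      ∫ x in a..b, (τ' x ^ 2 - q x * τ x ^ 2 - k * τ x ^ 2) := by
    refine intervalIntegral.sub_le_integral_of_hasDeriv_right_of_le hab (hP.mul hτsq)
      (g' := fun x => P' x * τ x ^ 2 + P x * (2 * τ x * τ' x)) (fun x hx => ?_)
      (hform.sub hkτsq).integrableOn_Icc fun x hx => ?_
    · have hd := (hP' x hx).mul ((hτ.hasDerivAt x (by rwa [interior_Icc])).pow 2)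
      exact (hd.congr_deriv (by simp)).hasDerivWithinAt
    · -- The difference of the two sides is `(τ' - P τ)² - (P' + P² + q + k) τ²`.
      linarith [sq_nonneg (τ' x - P x * τ x),
        mul_le_mul_of_nonneg_right (hRiccati x hx) (sq_nonneg (τ x))]
  rw [intervalIntegral.integral_sub (hform.intervalIntegrable_of_Icc hab)
    (hkτsq.intervalIntegrable_of_Icc hab), intervalIntegral.integral_const_mul] at hbound
  exact le_sub_iff_add_le.1 hbound

namespace IsJacobiField

theorem mono (hy : IsJacobiField q y y' s) (hts : t ⊆ s) : IsJacobiField q y y' t :=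
  ⟨hy.toIsC1On.mono hts, fun x hx => hy.hasDerivAt_deriv x (interior_mono hts hx)⟩

theorem add_const_mul (hy : IsJacobiField q y y' s) (hz : IsJacobiField q z z' s) (ε : ℝ) :
    IsJacobiField q (fun x => y x + ε * z x) (fun x => y' x + ε * z' x) s :=
  ⟨hy.toIsC1On.add_const_mul hz.toIsC1On ε, fun x hx =>
    ((hy.hasDerivAt_deriv x hx).add ((hz.hasDerivAt_deriv x hx).const_mul ε)).congr_deriv (by ring)⟩

theorem secondVariation_eq (hy : IsJacobiField q y y' (Icc a b)) (hab : a ≤ b)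
    (hq : ContinuousOn q (Icc a b)) :
    secondVariation q y y' a b = y b * y' b - y a * y' a :=
  intervalIntegral.integral_eq_sub_of_hasDerivAt_of_le hab
    (hy.continuousOn.mul hy.continuousOn_deriv)
    (fun x hx => by
      rw [← interior_Icc] at hx
      exact ((hy.hasDerivAt x hx).mul (hy.hasDerivAt_deriv x hx)).congr_deriv (by ring))
    ((hy.continuousOn_secondVariation hq).intervalIntegrable_of_Icc hab)

/-- The logarithmic derivative `P = y' / y` solves the Riccati equation `P' + P² + q = 0`; the
correction by a multiple of `(x - c) / y²` keeps its value at `c` and makes `P' + P² + q` negative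
for small `δ > 0`. -/
theorem hasDerivAt_div_sub_div {x : ℝ} (hy : IsJacobiField q y y' s) (hx : x ∈ interior s)
    (hyx : y x ≠ 0) (c δ : ℝ) :
    HasDerivAt (fun x => y' x / y x - δ * (x - c) / y x ^ 2)
      (-(y' x / y x - δ * (x - c) / y x ^ 2) ^ 2 - q x
        - δ / y x ^ 2 * (1 - δ * ((x - c) ^ 2 / y x ^ 2))) x := by
  have hlog := (hy.hasDerivAt_deriv x hx).div (hy.hasDerivAt x hx) hyx
  have hcorr := (((hasDerivAt_id x).sub_const c).const_mul δ).div ((hy.hasDerivAt x hx).pow 2)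
    (pow_ne_zero 2 hyx)
  refine (hlog.sub hcorr).congr_deriv ?_
  simp only [id_eq, Pi.pow_apply]
  field_simp
  ring

theorem exists_riccati_strict (hy : IsJacobiField q y y' (Icc a b)) (hne : ∀ x ∈ Icc a b, y x ≠ 0)
    (c : ℝ) :
    ∃ k > 0, ∃ P P' : ℝ → ℝ, ContinuousOn P (Icc a b) ∧ P c = y' c / y c ∧
      (∀ x ∈ Ioo a b, HasDerivAt P (P' x) x) ∧
      ∀ x ∈ Ioo a b, P' x + P x ^ 2 + q x ≤ -k := by
  have hne2 : ∀ x ∈ Icc a b, y x ^ 2 ≠ 0 := fun x hx => pow_ne_zero 2 (hne x hx)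
  have hcont : ContinuousOn (fun x => y x ^ 2 + (x - c) ^ 2 / y x ^ 2) (Icc a b) :=
    (hy.continuousOn.pow 2).add
      (ContinuousOn.div (by fun_prop) (hy.continuousOn.pow 2) hne2)
  obtain ⟨M, hM, hbound⟩ := (isCompact_Icc.image_of_continuousOn hcont).isBounded.exists_pos_norm_le
  obtain ⟨δ, hδ, hδM⟩ : ∃ δ > 0, δ * M = 1 / 2 := ⟨1 / (2 * M), by positivity, by field_simp⟩
  refine ⟨δ / M * (1 / 2), by positivity, fun x => y' x / y x - δ * (x - c) / y x ^ 2, _,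
    (hy.continuousOn_deriv.div hy.continuousOn hne).sub
      (ContinuousOn.div (by fun_prop) (hy.continuousOn.pow 2) hne2), by simp,
    fun x hx =>
      hy.hasDerivAt_div_sub_div (by rwa [interior_Icc]) (hne x (Ioo_subset_Icc_self hx)) c δ,
    fun x hx => ?_⟩
  have hyx := hne x (Ioo_subset_Icc_self hx)
  have hfrac : 0 ≤ (x - c) ^ 2 / y x ^ 2 := by positivity
  have hsum : y x ^ 2 + (x - c) ^ 2 / y x ^ 2 ≤ M :=
    (le_abs_self _).trans (hbound _ (mem_image_of_mem _ (Ioo_subset_Icc_self hx)))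
  have hhalf : δ * ((x - c) ^ 2 / y x ^ 2) ≤ 1 / 2 := by
    rw [← hδM]
    gcongr
    linarith [sq_nonneg (y x)]
  have hgain : δ / M * (1 / 2) ≤ δ / y x ^ 2 * (1 - δ * ((x - c) ^ 2 / y x ^ 2)) := by
    gcongr <;> linarith
  linarith

theorem exists_coercive_of_div_le (hy : IsJacobiField q y y' (Icc a c))
    (hz : IsJacobiField q z z' (Icc c b)) (hac : a ≤ c) (hcb : c ≤ b)
    (hq : ContinuousOn q (Icc a b)) (hy0 : ∀ x ∈ Icc a c, y x ≠ 0) (hz0 : ∀ x ∈ Icc c b, z x ≠ 0)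
    (hjump : z' c / z c ≤ y' c / y c) :
    ∃ k > 0, ∀ τ τ' : ℝ → ℝ, IsC1On τ τ' (Icc a b) → τ a = 0 → τ b = 0 →
      k * ∫ x in a..b, τ x ^ 2 ≤ secondVariation q τ τ' a b := by
  obtain ⟨k₁, hk₁, P, P', hP, hPc, hP', hRiccP⟩ := hy.exists_riccati_strict hy0 c
  obtain ⟨k₂, hk₂, R, R', hR, hRc, hR', hRiccR⟩ := hz.exists_riccati_strict hz0 c
  refine ⟨min k₁ k₂, lt_min hk₁ hk₂, fun τ τ' hτ ha hb => ?_⟩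
  have hsub₁ : Icc a c ⊆ Icc a b := Icc_subset_Icc_right hcb
  have hsub₂ : Icc c b ⊆ Icc a b := Icc_subset_Icc_left hac
  have hleft := (hτ.mono hsub₁).le_secondVariation_of_riccati hac (hq.mono hsub₁) hP hP'
    fun x hx => (hRiccP x hx).trans (neg_le_neg (min_le_left k₁ k₂))
  have hright := (hτ.mono hsub₂).le_secondVariation_of_riccati hcb (hq.mono hsub₂) hR hR'
    fun x hx => (hRiccR x hx).trans (neg_le_neg (min_le_right k₁ k₂))
  have hτsq : ContinuousOn (fun x => τ x ^ 2) (Icc a b) := hτ.continuousOn.pow 2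
  rw [← hτ.secondVariation_add_adjacent hq ⟨hac, hcb⟩,
    ← intervalIntegral.integral_add_adjacent_intervals
      ((hτsq.mono hsub₁).intervalIntegrable_of_Icc hac)
      ((hτsq.mono hsub₂).intervalIntegrable_of_Icc hcb)]
  rw [hPc, ha] at hleft
  rw [hRc, hb] at hright
  linarith [mul_le_mul_of_nonneg_right hjump (sq_nonneg (τ c))]

end IsJacobiField

theorem uIcc_subset_uIcc_sdiff_right {x : ℝ} (hx : x ∈ uIcc d c \ {c}) :
    uIcc d x ⊆ uIcc d c \ {c} := by
  intro t ht
  simp only [Set.mem_sdiff, mem_uIcc, mem_singleton_iff] at hx ht ⊢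
  grind

theorem continuousOn_primitive_uIcc_sdiff_right (hf : ContinuousOn f (uIcc d c \ {c})) :
    ContinuousOn (fun x => ∫ t in d..x, f t) (uIcc d c \ {c}) := by
  intro x hx
  have hxc : x ≠ c := hx.2
  have hmid : (x + c) / 2 ∈ uIcc d c \ {c} := by
    simp only [Set.mem_sdiff, mem_uIcc, mem_singleton_iff] at hx ⊢
    grind
  have hint : IntervalIntegrable f volume d ((x + c) / 2) :=
    (hf.mono (uIcc_subset_uIcc_sdiff_right hmid)).intervalIntegrable
  have hnhds : uIcc d ((x + c) / 2) ∈ 𝓝[uIcc d c \ {c}] x := by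
    have hball := Metric.ball_mem_nhds x (half_pos (abs_sub_pos.2 hxc.symm))
    filter_upwards [self_mem_nhdsWithin, mem_nhdsWithin_of_mem_nhds hball] with t ht htx
    rw [Metric.mem_ball, Real.dist_eq] at htx
    simp only [Set.mem_sdiff, mem_uIcc, mem_singleton_iff] at hx ht ⊢
    grind
  refine (intervalIntegral.continuousWithinAt_primitive (b₁ := min d ((x + c) / 2))
    (b₂ := max d ((x + c) / 2)) (measure_singleton x) ?_).mono_of_mem_nhdsWithin hnhds
  rcases le_total d ((x + c) / 2) with h | h
  · simpa [h] using hint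
  · simpa [h] using hint.symm

theorem hasDerivAt_primitive_of_mem_interior_uIcc {x : ℝ} (hf : ContinuousOn f (uIcc d c \ {c}))
    (hx : x ∈ interior (uIcc d c)) (hxc : x ≠ c) :
    HasDerivAt (fun x => ∫ t in d..x, f t) (f x) x := by
  have hopen : IsOpen (interior (uIcc d c) \ {c}) := isOpen_interior.sdiff isClosed_singleton
  have hf' := hf.mono (sdiff_subset_sdiff_left interior_subset)
  exact intervalIntegral.integral_hasDerivAt_right
    (hf.mono (uIcc_subset_uIcc_sdiff_right ⟨interior_subset hx, hxc⟩)).intervalIntegrable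
    (hf'.stronglyMeasurableAtFilter hopen x ⟨hx, hxc⟩)
    (hf'.continuousAt (hopen.mem_nhds ⟨hx, hxc⟩))

/-- The Jacobi field `w ∫_d 1 / w²` obtained from a Jacobi field `w` by reduction of order: the
paper's `μ(·; d)` for `w = θ'`. -/
noncomputable def reducedSolution (w : ℝ → ℝ) (d x : ℝ) : ℝ :=
  w x * ∫ t in d..x, 1 / (w t) ^ 2

/-- The derivative of `reducedSolution w d` where `w ≠ 0` and `w'` is the derivative of `w`: the
paper's `μ'(·; d)` for `w = θ'`. -/
noncomputable def reducedSolutionDeriv (w w' : ℝ → ℝ) (d x : ℝ) : ℝ :=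
  1 / w x + w' x * ∫ t in d..x, 1 / (w t) ^ 2

theorem mul_reducedSolutionDeriv_sub_one {x : ℝ} (hx : w x ≠ 0) :
    w x * reducedSolutionDeriv w w' d x - 1 = w' x * reducedSolution w d x := by
  rw [reducedSolutionDeriv, reducedSolution]
  field_simp
  ring

theorem sub_mul_integral_one_div_sq_nonneg {x : ℝ} (hx : x ∈ uIcc d c) (w : ℝ → ℝ) :
    0 ≤ (c - d) * ∫ t in d..x, 1 / (w t) ^ 2 := by
  rcases le_total d c with h | h
  · rw [uIcc_of_le h] at hx
    exact mul_nonneg (sub_nonneg.2 h)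
      (intervalIntegral.integral_nonneg hx.1 fun t _ => by positivity)
  · rw [uIcc_of_ge h] at hx
    rw [intervalIntegral.integral_symm]
    exact mul_nonneg_of_nonpos_of_nonpos (sub_nonpos.2 h)
      (neg_nonpos.2 (intervalIntegral.integral_nonneg hx.2 fun t _ => by positivity))

theorem IsC1On.continuousOn_one_div_sq (hw : IsC1On w w' (uIcc d c))
    (hw0 : ∀ x ∈ uIcc d c \ {c}, w x ≠ 0) :
    ContinuousOn (fun x => 1 / (w x) ^ 2) (uIcc d c \ {c}) :=
  continuousOn_const.div ((hw.continuousOn.mono sdiff_subset).pow 2) fun x hx =>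
    pow_ne_zero 2 (hw0 x hx)

namespace IsJacobiField

theorem hasDerivAt_reducedSolution {x : ℝ} (hw : IsJacobiField q w w' (uIcc d c))
    (hw0 : ∀ x ∈ uIcc d c \ {c}, w x ≠ 0) (hx : x ∈ interior (uIcc d c)) (hxc : x ≠ c) :
    HasDerivAt (reducedSolution w d) (reducedSolutionDeriv w w' d x) x := by
  have hwx : w x ≠ 0 := hw0 x ⟨interior_subset hx, hxc⟩
  refine ((hw.hasDerivAt x hx).mul (hasDerivAt_primitive_of_mem_interior_uIcc
    (hw.continuousOn_one_div_sq hw0) hx hxc)).congr_deriv ?_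
  rw [reducedSolutionDeriv]
  field_simp
  ring

theorem hasDerivAt_reducedSolutionDeriv {x : ℝ} (hw : IsJacobiField q w w' (uIcc d c))
    (hw0 : ∀ x ∈ uIcc d c \ {c}, w x ≠ 0) (hx : x ∈ interior (uIcc d c)) (hxc : x ≠ c) :
    HasDerivAt (reducedSolutionDeriv w w' d) (-(q x * reducedSolution w d x)) x := by
  have hwx : w x ≠ 0 := hw0 x ⟨interior_subset hx, hxc⟩
  refine (((hasDerivAt_const x 1).div (hw.hasDerivAt x hx) hwx).add
    ((hw.hasDerivAt_deriv x hx).mul (hasDerivAt_primitive_of_mem_interior_uIcc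
      (hw.continuousOn_one_div_sq hw0) hx hxc))).congr_deriv ?_
  rw [reducedSolution]
  field_simp
  ring

/-- At the zero `c` of `w` the reduced solution `u` is a product `0 · ∞`; its limit comes from the
Wronskian relation `w u' - w' u = 1`. -/
theorem tendsto_reducedSolution (hw : IsJacobiField q w w' (uIcc d c))
    (hwc : w c = 0) (hw0 : ∀ x ∈ uIcc d c \ {c}, w x ≠ 0) (hw'c : w' c ≠ 0)
    (hL : Tendsto (reducedSolutionDeriv w w' d) (𝓝[uIcc d c \ {c}] c) (𝓝 L)) :
    Tendsto (reducedSolution w d) (𝓝[uIcc d c \ {c}] c) (𝓝 (-1 / w' c)) := by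
  have hwlim : Tendsto w (𝓝[uIcc d c \ {c}] c) (𝓝 0) :=
    hwc ▸ (hw.continuousOn c right_mem_uIcc).mono_left (nhdsWithin_mono c sdiff_subset)
  have hw'lim : Tendsto w' (𝓝[uIcc d c \ {c}] c) (𝓝 (w' c)) :=
    (hw.continuousOn_deriv c right_mem_uIcc).mono_left (nhdsWithin_mono c sdiff_subset)
  have hquot := ((hwlim.mul hL).sub_const 1).div hw'lim hw'c
  rw [zero_mul, zero_sub] at hquot
  refine hquot.congr' ?_
  filter_upwards [self_mem_nhdsWithin, hw'lim.eventually_ne hw'c] with x hx hw'x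
  rw [Pi.div_apply, mul_reducedSolutionDeriv_sub_one (hw0 x hx), mul_div_cancel_left₀ _ hw'x]

theorem update_reducedSolution (hw : IsJacobiField q w w' (uIcc d c))
    (hwc : w c = 0) (hw0 : ∀ x ∈ uIcc d c \ {c}, w x ≠ 0) (hw'c : w' c ≠ 0)
    (hL : Tendsto (reducedSolutionDeriv w w' d) (𝓝[uIcc d c \ {c}] c) (𝓝 L)) :
    IsJacobiField q (Function.update (reducedSolution w d) c (-1 / w' c))
      (Function.update (reducedSolutionDeriv w w' d) c L) (uIcc d c) := by
  have hwcont : ContinuousOn w (uIcc d c \ {c}) := hw.continuousOn.mono sdiff_subset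
  have hw'cont : ContinuousOn w' (uIcc d c \ {c}) := hw.continuousOn_deriv.mono sdiff_subset
  have hprim := continuousOn_primitive_uIcc_sdiff_right (hw.continuousOn_one_div_sq hw0)
  have hinterior : ∀ x ∈ interior (uIcc d c), x ≠ c := by
    rintro x hx rfl
    rw [uIcc, interior_Icc] at hx
    exact right_notMem_uIoo hx
  have hupdate {x : ℝ} (hxc : x ≠ c) (f : ℝ → ℝ) (v : ℝ) : Function.update f c v =ᶠ[𝓝 x] f :=
    (eventually_ne_nhds hxc).mono fun _ h => Function.update_of_ne h v f
  refine ⟨⟨continuousOn_update_iff.2 ⟨hwcont.mul hprim, fun _ => ?_⟩, continuousOn_update_iff.2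
    ⟨(continuousOn_const.div hwcont hw0).add (hw'cont.mul hprim), fun _ => hL⟩,
    fun x hx => ?_⟩, fun x hx => ?_⟩
  · exact hw.tendsto_reducedSolution hwc hw0 hw'c hL
  · rw [Function.update_of_ne (hinterior x hx)]
    exact (hw.hasDerivAt_reducedSolution hw0 hx (hinterior x hx)).congr_of_eventuallyEq
      (hupdate (hinterior x hx) _ _)
  · rw [Function.update_of_ne (hinterior x hx)]
    exact (hw.hasDerivAt_reducedSolutionDeriv hw0 hx (hinterior x hx)).congr_of_eventuallyEq
      (hupdate (hinterior x hx) _ _)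

theorem exists_ne_zero_of_tendsto (hw : IsJacobiField q w w' (uIcc d c)) (hwc : w c = 0)
    (hw0 : ∀ x ∈ uIcc d c \ {c}, w x ≠ 0) (hw'c : w' c ≠ 0)
    (hL : Tendsto (reducedSolutionDeriv w w' d) (𝓝[uIcc d c \ {c}] c) (𝓝 L))
    (hε : 0 < (c - d) * ε) :
    ∃ y y' : ℝ → ℝ, IsJacobiField q y y' (uIcc d c) ∧ (∀ x ∈ uIcc d c, y x ≠ 0) ∧
      y' c / y c = -w' c * (L + ε * w' c) := by
  have hdc : d ≠ c := by
    rintro rfl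
    simp at hε
  refine ⟨_, _, (hw.update_reducedSolution hwc hw0 hw'c hL).add_const_mul hw ε,
    fun x hx => ?_, ?_⟩
  · rcases eq_or_ne x c with rfl | hxc
    · simp [hwc, hw'c]
    · -- Here the sum is `w (∫_d^x 1 / w² + ε)`, and both summands have the sign of `c - d`.
      have hfactor : 0 < (c - d) * ((∫ t in d..x, 1 / (w t) ^ 2) + ε) := by
        rw [mul_add]
        exact add_pos_of_nonneg_of_pos (sub_mul_integral_one_div_sq_nonneg hx w) hε
      rw [Function.update_of_ne hxc, reducedSolution, mul_comm ε, ← mul_add]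
      exact mul_ne_zero (hw0 x ⟨hx, hxc⟩) (right_ne_zero_of_mul hfactor.ne')
  · simp only [Function.update_self, hwc]
    field_simp
    ring

end IsJacobiField

theorem tendsto_secondVariation {ι : Type*} {l : Filter ι} [l.IsCountablyGenerated]
    {σ σ' : ι → ℝ → ℝ} {C : ℝ} (hab : a ≤ b) (hq : ContinuousOn q (Icc a b))
    (hσ : ∀ᶠ n in l, IsC1On (σ n) (σ' n) (Icc a b))
    (hC : ∀ᶠ n in l, ∀ x ∈ Icc a b, |σ n x| ≤ C ∧ |σ' n x| ≤ C)
    (hlim : ∀ᵐ x, x ∈ Icc a b →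
      Tendsto (fun n => σ n x) l (𝓝 (τ x)) ∧ Tendsto (fun n => σ' n x) l (𝓝 (τ' x))) :
    Tendsto (fun n => secondVariation q (σ n) (σ' n) a b) l (𝓝 (secondVariation q τ τ' a b)) := by
  obtain ⟨K, hK⟩ := isCompact_Icc.exists_bound_of_continuousOn hq
  have hsub : uIoc a b ⊆ Icc a b := by
    rw [uIoc_of_le hab]
    exact Ioc_subset_Icc_self
  refine intervalIntegral.tendsto_integral_filter_of_dominated_convergence
    (fun _ => C ^ 2 + K * C ^ 2) ?_ ?_ intervalIntegrable_const ?_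
  · filter_upwards [hσ] with n hn
    exact ((hn.continuousOn_secondVariation hq).mono hsub).aestronglyMeasurable measurableSet_uIoc
  · filter_upwards [hC] with n hn
    refine Eventually.of_forall fun x hx => ?_
    obtain ⟨hσC, hσC'⟩ := hn x (hsub hx)
    have hqK : |q x| ≤ K := hK x (hsub hx)
    have hK0 : 0 ≤ K := (abs_nonneg _).trans hqK
    calc ‖σ' n x ^ 2 - q x * σ n x ^ 2‖ ≤ |σ' n x| ^ 2 + |q x| * |σ n x| ^ 2 := by
          rw [← abs_pow, ← abs_pow, ← abs_mul]
          exact norm_sub_le _ _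
      _ ≤ C ^ 2 + K * C ^ 2 := by gcongr
  · filter_upwards [hlim] with x hx hxI
    obtain ⟨hx, hx'⟩ := hx (hsub hxI)
    exact (hx'.pow 2).sub ((hx.pow 2).const_mul (q x))

theorem exists_contDiff_hasCompactSupport_deriv_eq_one :
    ∃ φ : ℝ → ℝ, ContDiff ℝ 1 φ ∧ HasCompactSupport φ ∧ φ 0 = 0 ∧ deriv φ 0 = 1 := by
  let χ : ContDiffBump (0 : ℝ) := ⟨1, 2, one_pos, one_lt_two⟩
  have hid : (fun x => x * χ x) =ᶠ[𝓝 0] id := by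
    filter_upwards [χ.eventuallyEq_one] with x hx
    simp [hx]
  exact ⟨fun x => x * χ x, contDiff_id.mul χ.contDiff, χ.hasCompactSupport.mul_left, by simp,
    by rw [hid.deriv_eq, deriv_id]⟩

theorem eventually_mul_eq_zero_of_hasCompactSupport {x : ℝ} (hf : HasCompactSupport f)
    (hx : x ≠ 0) :
    ∀ᶠ n : ℝ in atTop, f (n * x) = 0 := by
  have hlim : Tendsto (fun n : ℝ => n * x) atTop (cocompact ℝ) :=
    (tendsto_cocompact_mul_right₀ hx).comp atTop_le_cocompact
  rw [hasCompactSupport_iff_eventuallyEq, coclosedCompact_eq_cocompact] at hf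
  exact hlim.eventually hf

/-- Corrections `n⁻¹ φ (n (x - c))`, with `φ` compactly supported and `φ' 0 = 1`, which have slope
`1` at `c` and disappear elsewhere as `n → ∞`. -/
theorem exists_slope_concentrating_at (c : ℝ) :
    ∃ (ρ ρ' : ℝ → ℝ → ℝ) (C : ℝ),
      (∀ᶠ n in atTop, (∀ s, IsC1On (ρ n) (ρ' n) s) ∧ ρ n c = 0 ∧ ρ' n c = 1 ∧
        ∀ x, |ρ n x| ≤ C ∧ |ρ' n x| ≤ C) ∧
      ∀ x ≠ c, ∀ᶠ n in atTop, ρ n x = 0 ∧ ρ' n x = 0 := by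
  obtain ⟨φ, hφ, hsupp, hφ0, hφ'0⟩ := exists_contDiff_hasCompactSupport_deriv_eq_one
  have hφ' : Continuous (deriv φ) := hφ.continuous_deriv le_rfl
  obtain ⟨C, hC⟩ := hφ.continuous.bounded_above_of_compact_support hsupp
  obtain ⟨C', hC'⟩ := hφ'.bounded_above_of_compact_support hsupp.deriv
  refine ⟨fun n x => n⁻¹ * φ (n * (x - c)), fun n x => deriv φ (n * (x - c)), max C C', ?_,
    fun x hx => ?_⟩
  · filter_upwards [eventually_ge_atTop 1] with n hn
    have hn0 : 0 < n := one_pos.trans_le hn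
    refine ⟨fun s => .of_hasDerivAt (fun x _ => ?_) (by fun_prop), by simp [hφ0],
      by simp [hφ'0], fun x => ⟨?_, (hC' _).trans (le_max_right _ _)⟩⟩
    · have hinner : HasDerivAt (fun x => n * (x - c)) n x := by
        simpa using ((hasDerivAt_id x).sub_const c).const_mul n
      refine (((hφ.differentiable one_ne_zero _).hasDerivAt.comp x hinner).const_mul
        n⁻¹).congr_deriv ?_
      field_simp
    · calc |n⁻¹ * φ (n * (x - c))| = n⁻¹ * |φ (n * (x - c))| := by
            rw [abs_mul, abs_of_pos (inv_pos.2 hn0)]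
        _ ≤ |φ (n * (x - c))| := mul_le_of_le_one_left (abs_nonneg _) (inv_le_one_of_one_le₀ hn)
        _ ≤ max C C' := (hC _).trans (le_max_left _ _)
  · filter_upwards [eventually_mul_eq_zero_of_hasCompactSupport hsupp (sub_ne_zero.2 hx),
      eventually_mul_eq_zero_of_hasCompactSupport hsupp.deriv (sub_ne_zero.2 hx)] with n hn hn'
    exact ⟨by rw [hn, mul_zero], hn'⟩

theorem IsC1On.exists_deriv_left_eq_secondVariation_lt (hf : IsC1On f f' (Icc c b)) (hcb : c < b)
    (hq : ContinuousOn q (Icc c b)) (m : ℝ) (hlt : secondVariation q f f' c b < η) :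
    ∃ g g' : ℝ → ℝ, IsC1On g g' (Icc c b) ∧ g c = f c ∧ g' c = m ∧ g b = f b ∧
      secondVariation q g g' c b < η := by
  obtain ⟨ρ, ρ', C, hρ, hlim⟩ := exists_slope_concentrating_at c
  obtain ⟨K, hK⟩ := isCompact_Icc.exists_bound_of_continuousOn hf.continuousOn
  obtain ⟨K', hK'⟩ := isCompact_Icc.exists_bound_of_continuousOn hf.continuousOn_deriv
  set J := m - f' c with hJ
  have habs {u v A : ℝ} (hu : |u| ≤ A) (hAK : A ≤ max K K') (hv : |v| ≤ C) :
      |u + J * v| ≤ max K K' + |J| * C :=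
    calc |u + J * v| ≤ |u| + |J| * |v| := by rw [← abs_mul]; exact abs_add_le _ _
      _ ≤ max K K' + |J| * C := by gcongr; exact hu.trans hAK
  have hconv : Tendsto (fun n => secondVariation q (fun x => f x + J * ρ n x)
      (fun x => f' x + J * ρ' n x) c b) atTop (𝓝 (secondVariation q f f' c b)) := by
    refine tendsto_secondVariation (C := max K K' + |J| * C) hcb.le hq
      (hρ.mono fun n hn => hf.add_const_mul (hn.1 _) J) (hρ.mono fun n hn x hx => ?_) ?_
    · exact ⟨habs (hK x hx) (le_max_left _ _) (hn.2.2.2 x).1,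
        habs (hK' x hx) (le_max_right _ _) (hn.2.2.2 x).2⟩
    · filter_upwards [Measure.ae_ne volume c] with x hx _
      exact ⟨tendsto_nhds_of_eventually_eq ((hlim x hx).mono fun n hn => by simp [hn.1]),
        tendsto_nhds_of_eventually_eq ((hlim x hx).mono fun n hn => by simp [hn.2])⟩
  obtain ⟨n, hlt, ⟨hC1, hρc, hρ'c, -⟩, hρb, -⟩ :=
    (hconv.eventually_lt_const hlt).and (hρ.and (hlim b hcb.ne')) |>.exists
  exact ⟨_, _, hf.add_const_mul (hC1 _) J, by simp [hρc], by simp [hρ'c, hJ], by simp [hρb], hlt⟩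

theorem IsC1On.exists_secondVariation_lt_of_corner (hf : IsC1On f f' (Icc a c))
    (hg : IsC1On g g' (Icc c b)) (hac : a ≤ c) (hcb : c < b) (hq : ContinuousOn q (Icc a b))
    (hfg : f c = g c) (hlt : secondVariation q f f' a c + secondVariation q g g' c b < η) :
    ∃ τ τ' : ℝ → ℝ, (∀ x, HasDerivAt τ (τ' x) x) ∧ Continuous τ' ∧ τ a = f a ∧ τ c = f c ∧
      τ b = g b ∧ secondVariation q τ τ' a b < η := by
  obtain ⟨h, h', hh, hhc, hh'c, hhb, hhlt⟩ := hg.exists_deriv_left_eq_secondVariation_lt hcb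
    (hq.mono (Icc_subset_Icc_left hac)) (f' c) (lt_sub_iff_add_lt'.2 hlt)
  obtain ⟨τ, τ', hτ, hτ', hτf, hτf', hτh, hτh'⟩ :=
    hf.exists_hasDerivAt_eqOn_of_eq hh hac hcb.le (hfg.trans hhc.symm) hh'c.symm
  refine ⟨τ, τ', hτ, hτ', hτf (left_mem_Icc.2 hac), hτf (right_mem_Icc.2 hac),
    (hτh (right_mem_Icc.2 hcb.le)).trans hhb, ?_⟩
  have hτC1 : IsC1On τ τ' (Icc a b) := .of_hasDerivAt (fun x _ => hτ x) hτ'.continuousOn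
  rw [← hτC1.secondVariation_add_adjacent hq ⟨hac, hcb.le⟩, secondVariation_congr hac hτf hτf',
    secondVariation_congr hcb.le hτh hτh']
  exact lt_sub_iff_add_lt'.1 hhlt

theorem nhdsWithin_uIcc_sdiff_right_of_lt (h : d < c) : 𝓝[uIcc d c \ {c}] c = 𝓝[<] c := by
  rw [uIcc_of_le h.le, Icc_sdiff_right, nhdsWithin_Ico_eq_nhdsLT h]

theorem nhdsWithin_uIcc_sdiff_right_of_gt (h : c < d) : 𝓝[uIcc d c \ {c}] c = 𝓝[>] c := by
  rw [uIcc_of_ge h.le, Icc_sdiff_left, nhdsWithin_Ioc_eq_nhdsGT h]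

namespace IsJacobiField

theorem exists_coercive_of_mul_lt (hw : IsJacobiField q w w' (Icc a b))
    (hq : ContinuousOn q (Icc a b)) (hc : c ∈ Ioo a b) (hwc : w c = 0)
    (hw0 : ∀ x ∈ Icc a b \ {c}, w x ≠ 0) (hw'c : w' c ≠ 0)
    (hLa : Tendsto (reducedSolutionDeriv w w' a) (𝓝[<] c) (𝓝 La))
    (hLb : Tendsto (reducedSolutionDeriv w w' b) (𝓝[>] c) (𝓝 Lb)) (hL : w' c * La < w' c * Lb) :
    ∃ k > 0, ∀ τ τ' : ℝ → ℝ, IsC1On τ τ' (Icc a b) → τ a = 0 → τ b = 0 →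
      k * ∫ x in a..b, τ x ^ 2 ≤ secondVariation q τ τ' a b := by
  have hcI := Ioo_subset_Icc_self hc
  have ha : uIcc a c ⊆ Icc a b := uIcc_subset_Icc (left_mem_Icc.2 (hc.1.trans hc.2).le) hcI
  have hb : uIcc b c ⊆ Icc a b := uIcc_subset_Icc (right_mem_Icc.2 (hc.1.trans hc.2).le) hcI
  rw [← nhdsWithin_uIcc_sdiff_right_of_lt hc.1] at hLa
  rw [← nhdsWithin_uIcc_sdiff_right_of_gt hc.2] at hLb
  obtain ⟨ε, hε, hεL⟩ : ∃ ε > 0, 2 * ε * w' c ^ 2 = w' c * Lb - w' c * La :=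
    ⟨(w' c * Lb - w' c * La) / (2 * w' c ^ 2), div_pos (sub_pos.2 hL) (by positivity),
      by field_simp⟩
  obtain ⟨y, y', hy, hy0, hyc⟩ := (hw.mono ha).exists_ne_zero_of_tendsto hwc
    (fun x hx => hw0 x (sdiff_subset_sdiff_left ha hx)) hw'c hLa (mul_pos (sub_pos.2 hc.1) hε)
  obtain ⟨z, z', hz, hz0, hzc⟩ := (hw.mono hb).exists_ne_zero_of_tendsto hwc
    (fun x hx => hw0 x (sdiff_subset_sdiff_left hb hx)) hw'c hLb
    (mul_pos_of_neg_of_neg (sub_neg.2 hc.2) (neg_neg_of_pos hε))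
  rw [uIcc_of_le hc.1.le] at hy hy0
  rw [uIcc_of_ge hc.2.le] at hz hz0
  refine hy.exists_coercive_of_div_le hz hc.1.le hc.2.le hq hy0 hz0 ?_
  rw [hyc, hzc]
  linarith

theorem exists_secondVariation_neg_of_mul_lt (hw : IsJacobiField q w w' (Icc a b))
    (hq : ContinuousOn q (Icc a b)) (hc : c ∈ Ioo a b) (hwc : w c = 0)
    (hw0 : ∀ x ∈ Icc a b \ {c}, w x ≠ 0) (hw'c : w' c ≠ 0)
    (hLa : Tendsto (reducedSolutionDeriv w w' a) (𝓝[<] c) (𝓝 La))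
    (hLb : Tendsto (reducedSolutionDeriv w w' b) (𝓝[>] c) (𝓝 Lb)) (hL : w' c * Lb < w' c * La) :
    ∃ τ τ' : ℝ → ℝ, (∀ x, HasDerivAt τ (τ' x) x) ∧ Continuous τ' ∧ τ c ≠ 0 ∧ τ a = 0 ∧ τ b = 0 ∧
      secondVariation q τ τ' a b < 0 := by
  have hcI := Ioo_subset_Icc_self hc
  have ha : uIcc a c ⊆ Icc a b := uIcc_subset_Icc (left_mem_Icc.2 (hc.1.trans hc.2).le) hcI
  have hb : uIcc b c ⊆ Icc a b := uIcc_subset_Icc (right_mem_Icc.2 (hc.1.trans hc.2).le) hcI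
  rw [← nhdsWithin_uIcc_sdiff_right_of_lt hc.1] at hLa
  rw [← nhdsWithin_uIcc_sdiff_right_of_gt hc.2] at hLb
  have hu := (hw.mono ha).update_reducedSolution hwc
    (fun x hx => hw0 x (sdiff_subset_sdiff_left ha hx)) hw'c hLa
  have hv := (hw.mono hb).update_reducedSolution hwc
    (fun x hx => hw0 x (sdiff_subset_sdiff_left hb hx)) hw'c hLb
  rw [uIcc_of_le hc.1.le] at hu
  rw [uIcc_of_ge hc.2.le] at hv
  have hend {d : ℝ} (hdc : d ≠ c) :
      Function.update (reducedSolution w d) c (-1 / w' c) d = 0 := by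
    simp [Function.update_of_ne hdc, reducedSolution]
  obtain ⟨τ, τ', hτ, hτ', hτa, hτc, hτb, hneg⟩ := hu.toIsC1On.exists_secondVariation_lt_of_corner
    hv.toIsC1On hc.1.le hc.2 hq (η := 0) (by simp only [Function.update_self]) <| by
    rw [hu.secondVariation_eq hc.1.le (hq.mono (Icc_subset_Icc_right hc.2.le)),
      hv.secondVariation_eq hc.2.le (hq.mono (Icc_subset_Icc_left hc.1.le)),
      hend hc.1.ne, hend hc.2.ne']
    simp only [Function.update_self]
    calc _ = (w' c * Lb - w' c * La) / w' c ^ 2 := by field_simp; ring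
      _ < 0 := div_neg_of_neg_of_pos (sub_neg.2 hL) (by positivity)
  refine ⟨τ, τ', hτ, hτ', ?_, hτa.trans (hend hc.1.ne), hτb.trans (hend hc.2.ne'), hneg⟩
  rw [hτc, Function.update_self]
  exact div_ne_zero (by norm_num) hw'c

end IsJacobiField

theorem mul_deriv_neg_of_ne_zero {m : ℝ} (hac : a < c) (hf : ContinuousOn f (Icc a c))
    (hf0 : ∀ x ∈ Ico a c, f x ≠ 0) (hfc : f c = 0) (hd : HasDerivAt f m c) (hm : m ≠ 0) :
    f a * m < 0 := by
  have hsign : ∀ x ∈ Ico a c, 0 < f a * f x := by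
    intro x hx
    by_contra! hneg
    have hzero : (0 : ℝ) ∈ uIcc (f a) (f x) := by
      rw [mem_uIcc, and_comm (a := f x ≤ 0)]
      exact (mul_nonpos_iff.1 hneg).symm
    have hsub : uIcc a x ⊆ Ico a c := by
      rw [uIcc_of_le hx.1]
      exact Icc_subset_Ico_right hx.2
    obtain ⟨t, ht, hft⟩ := intermediate_value_uIcc
      (hf.mono (hsub.trans Ico_subset_Icc_self)) hzero
    exact hf0 t (hsub ht) hft
  have hslope : Tendsto (fun x => f a * slope f c x) (𝓝[<] c) (𝓝 (f a * m)) :=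
    (((hasDerivAt_iff_tendsto_slope.1 hd).mono_left
      (nhdsWithin_mono c fun x hx => ne_of_lt hx))).const_mul (f a)
  refine lt_of_le_of_ne (le_of_tendsto hslope ?_) (mul_ne_zero (hf0 a ⟨le_rfl, hac⟩) hm)
  filter_upwards [Ioo_mem_nhdsLT hac] with x hx
  rw [slope_def_field, hfc, sub_zero, ← mul_div_assoc]
  exact (div_neg_of_pos_of_neg (hsign x ⟨hx.1.le, hx.2⟩) (sub_neg.2 hx.2)).le

theorem mul_lt_mul_left_iff_of_mul_neg {x y p r : ℝ} (h : x * y < 0) :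
    x * p < x * r ↔ y * r < y * p := by
  rcases mul_neg_iff.1 h with ⟨hx, hy⟩ | ⟨hx, hy⟩
  · rw [mul_lt_mul_iff_right₀ hx, mul_lt_mul_left_of_neg hy]
  · rw [mul_lt_mul_left_of_neg hx, mul_lt_mul_iff_right₀ hy]

theorem isJacobiField_of_eulerLagrange {V θ θ' θ'' : ℝ → ℝ} (hV : ContDiff ℝ 2 V)
    (hθ : ∀ x ∈ s, HasDerivAt θ (θ' x) x) (hθ' : ∀ x ∈ s, HasDerivAt θ' (θ'' x) x)
    (hEL : ∀ x ∈ s, θ'' x + deriv V (θ x) = 0) :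
    IsJacobiField (fun x => deriv (deriv V) (θ x)) θ' θ'' s := by
  have hEq : EqOn θ'' (fun x => -deriv V (θ x)) s :=
    fun x hx => eq_neg_of_add_eq_zero_left (hEL x hx)
  have hdV : ContDiff ℝ 1 (deriv V) := hV.deriv'
  refine ⟨.of_hasDerivAt hθ' ?_, fun x hx => ?_⟩
  · exact ((hdV.continuous.comp_continuousOn (HasDerivAt.continuousOn hθ)).neg).congr hEq
  · exact ((hdV.differentiable one_ne_zero _).hasDerivAt.comp x
      (hθ x (interior_subset hx))).neg.congr_of_eventuallyEq
      (hEq.eventuallyEq_of_mem (mem_interior_iff_mem_nhds.1 hx))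

end

theorem stmt_9 (a b : ℝ) (hab : a < b) (V : ℝ → ℝ) (hV : ContDiff ℝ 2 V)
    (θ θ' θ'' : ℝ → ℝ)
    (hθ1 : ∀ s ∈ Set.Icc a b, HasDerivAt θ (θ' s) s)
    (hθ2 : ∀ s ∈ Set.Icc a b, HasDerivAt θ' (θ'' s) s)
    (hθc : ContinuousOn θ'' (Set.Icc a b))
    (hEL : ∀ s ∈ Set.Icc a b, θ'' s + deriv V (θ s) = 0)
    (c : ℝ) (hc : c ∈ Set.Ioo a b) (hzc : θ' c = 0)
    (huniq : ∀ s ∈ Set.Icc a b, θ' s = 0 → s = c)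
    (hVc : deriv V (θ c) ≠ 0)
    (La Lb : ℝ)
    (hLa : Filter.Tendsto (fun s => 1 / θ' s + θ'' s * ∫ t in a..s, 1 / (θ' t) ^ 2)
      (nhdsWithin c (Set.Iio c)) (nhds La))
    (hLb : Filter.Tendsto (fun s => 1 / θ' s + θ'' s * ∫ t in b..s, 1 / (θ' t) ^ 2)
      (nhdsWithin c (Set.Ioi c)) (nhds Lb)) :
    (θ' a * La > θ' a * Lb →
      ∃ k > 0, ∀ τ τ' : ℝ → ℝ,
        (∀ s ∈ Set.Icc a b, HasDerivAt τ (τ' s) s) →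
        ContinuousOn τ' (Set.Icc a b) →
        τ a = 0 → τ b = 0 →
        (∫ s in a..b, (τ' s ^ 2 - deriv (deriv V) (θ s) * τ s ^ 2)) ≥
          k * ∫ s in a..b, τ s ^ 2) ∧
    (θ' a * La < θ' a * Lb →
      ∃ τ τ' : ℝ → ℝ,
        (∀ s ∈ Set.Icc a b, HasDerivAt τ (τ' s) s) ∧
        ContinuousOn τ' (Set.Icc a b) ∧
        (∃ s ∈ Set.Icc a b, τ s ≠ 0) ∧
        τ a = 0 ∧ τ b = 0 ∧
        (∫ s in a..b, (τ' s ^ 2 - deriv (deriv V) (θ s) * τ s ^ 2)) < 0) := by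
  have hJacobi := isJacobiField_of_eulerLagrange hV hθ1 hθ2 hEL
  have hq : ContinuousOn (fun s => deriv (deriv V) (θ s)) (Icc a b) :=
    (hV.deriv'.continuous_deriv le_rfl).comp_continuousOn (HasDerivAt.continuousOn hθ1)
  have hcI := Ioo_subset_Icc_self hc
  have hne : ∀ s ∈ Icc a b \ {c}, θ' s ≠ 0 := fun s hs h => hs.2 (huniq s hs.1 h)
  have hθ''c : θ'' c ≠ 0 := fun h => hVc (by simpa [h] using hEL c hcI)
  have hsign : θ' a * θ'' c < 0 :=
    mul_deriv_neg_of_ne_zero hc.1 (hJacobi.continuousOn.mono (Icc_subset_Icc_right hc.2.le))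
      (fun s hs => hne s ⟨⟨hs.1, hs.2.le.trans hc.2.le⟩, hs.2.ne⟩) hzc (hθ2 c hcI) hθ''c
  constructor
  · intro hL
    obtain ⟨k, hk, hcoercive⟩ := hJacobi.exists_coercive_of_mul_lt hq hc hzc hne hθ''c hLa hLb
      ((mul_lt_mul_left_iff_of_mul_neg hsign).1 hL)
    exact ⟨k, hk, fun τ τ' hτ hτ' => hcoercive τ τ' (.of_hasDerivAt hτ hτ')⟩
  · intro hL
    obtain ⟨τ, τ', hτ, hτ', hτc, hτa, hτb, hneg⟩ :=
      hJacobi.exists_secondVariation_neg_of_mul_lt hq hc hzc hne hθ''c hLa hLb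
        ((mul_lt_mul_left_iff_of_mul_neg hsign).1 hL)
    exact ⟨τ, τ', fun s _ => hτ s, hτ'.continuousOn, ⟨c, hcI, hτc⟩, hτa, hτb, hneg⟩
end

section
/- Let θ ∈ C²([a,b],ℝ) satisfy θ''(s) + V'(θ(s)) = 0 for all s ∈ [a,b], and assume there is no s ∈ [a,b] with θ'(s) = 0 and V'(θ(s)) = 0 simultaneously. Let c ∈ (a,b) be such that V'(θ(c)) = 0. Then for every σ ∈ (c,b]: there exists a not-identically-zero τ ∈ C²([c,σ],ℝ) with −τ''(s) − V''(θ(s))·τ(s) = 0 on [c,σ] and τ'(c) = τ'(σ) = 0 if and only if V'(θ(σ)) = 0. In other words, the Neumann conjugate points to c in (c,b] are exactly the points σ at which θ(σ) is a critical point of V. -/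
/-!
Differentiating `θ'' + V'(θ) = 0` shows that the velocity `θ'` solves the Jacobi equation
`τ'' + V''(θ) τ = 0`, and it is Neumann at `c` because `θ''(c) = -V'(θ(c)) = 0`. If `V'(θ(σ)) = 0`,
then `θ'` is Neumann at `σ` as well. Conversely, the Wronskian of a solution `τ` that is Neumann at
`c` and `σ` with `θ'` vanishes at `c`, hence at `σ`, where it equals `-τ(σ) V'(θ(σ))`. So if
`V'(θ(σ)) ≠ 0`, then `τ(σ) = τ'(σ) = 0` and `τ` vanishes identically.
-/

section Hill

open Set

/-- The time-dependent vector field of Hill's equation `x'' + q x = 0` on the phase space of pairs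
`(x, x')`. A solution is encoded, together with its derivative, as an integral curve of this
field. -/
def hillField {R : Type*} [Ring R] (q : ℝ → R) (t : ℝ) (p : R × R) : R × R :=
  (p.2, -(q t * p.1))

/-- The Wronskian `x y' - x' y`, as a bilinear form on the phase space of pairs `(x, x')`: a
conserved quantity for pairs of solutions of Hill's equation. -/
def wronskian {R : Type*} [CommRing R] (p p' : R × R) : R :=
  p.1 * p'.2 - p.2 * p'.1

section NormedRing

variable {𝔸 : Type*} [NormedRing 𝔸]

theorem lipschitzWith_hillField (q : ℝ → 𝔸) (t : ℝ) :
    LipschitzWith (max 1 ‖q t‖₊) (hillField q t) := by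
  have hmul : LipschitzWith ‖q t‖₊ fun p : 𝔸 × 𝔸 ↦ -(q t * p.1) := by
    refine LipschitzWith.of_dist_le_mul fun p p' ↦ ?_
    calc dist (-(q t * p.1)) (-(q t * p'.1)) = ‖q t * (p.1 - p'.1)‖ := by
          rw [dist_neg_neg, dist_eq_norm, mul_sub]
      _ ≤ ‖q t‖ * dist p.1 p'.1 := by
          rw [dist_eq_norm]
          exact norm_mul_le _ _
      _ ≤ ‖q t‖ * dist p p' := by
          gcongr
          exact le_max_left _ _
  exact LipschitzWith.prod_snd.prodMk hmul

variable [NormedAlgebra ℝ 𝔸] {q : ℝ → 𝔸} {γ δ : ℝ → 𝔸 × 𝔸} {a b : ℝ}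

theorem isIntegralCurveOn_zero_hillField (q : ℝ → 𝔸) (S : Set ℝ) :
    IsIntegralCurveOn (fun _ ↦ 0) (hillField q) S :=
  (isIntegralCurve_const fun t ↦ by simp [hillField]).isIntegralCurveOn S

theorem eqOn_of_isIntegralCurveOn_hillField_of_eq_right (hq : ContinuousOn q (Icc a b))
    (hγ : IsIntegralCurveOn γ (hillField q) (Icc a b))
    (hδ : IsIntegralCurveOn δ (hillField q) (Icc a b)) (hb : γ b = δ b) :
    EqOn γ δ (Icc a b) := by
  obtain ⟨K, hK⟩ := isCompact_Icc.bddAbove_image hq.nnnorm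
  have hlip : ∀ t ∈ Ioc a b, LipschitzOnWith (max 1 K) (hillField q t) univ := fun t ht ↦
    ((lipschitzWith_hillField q t).weaken <| max_le_max_left 1 <|
      hK <| mem_image_of_mem _ <| Ioc_subset_Icc_self ht).lipschitzOnWith
  have hleft {ε : ℝ → 𝔸 × 𝔸} (hε : IsIntegralCurveOn ε (hillField q) (Icc a b)) :
      ∀ t ∈ Ioc a b, HasDerivWithinAt ε (hillField q t (ε t)) (Iic t) t := fun t ht ↦
    (hε t (Ioc_subset_Icc_self ht)).mono_of_mem_nhdsWithin (Icc_mem_nhdsLE_of_mem ht)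
  exact ODE_solution_unique_of_mem_Icc_left hlip hγ.continuousOn (hleft hγ) (fun _ _ ↦ mem_univ _)
    hδ.continuousOn (hleft hδ) (fun _ _ ↦ mem_univ _) hb

end NormedRing

section NormedCommRing

variable {𝔸 : Type*} [NormedCommRing 𝔸] [NormedAlgebra ℝ 𝔸]
  {q : ℝ → 𝔸} {γ δ : ℝ → 𝔸 × 𝔸}

theorem hasDerivWithinAt_wronskian_hillField {S : Set ℝ} {t : ℝ}
    (hγ : HasDerivWithinAt γ (hillField q t (γ t)) S t)
    (hδ : HasDerivWithinAt δ (hillField q t (δ t)) S t) :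
    HasDerivWithinAt (fun s ↦ wronskian (γ s) (δ s)) 0 S t := by
  have hfst {ε : ℝ → 𝔸 × 𝔸} (hε : HasDerivWithinAt ε (hillField q t (ε t)) S t) :
      HasDerivWithinAt (fun s ↦ (ε s).1) (ε t).2 S t :=
    (hasFDerivAt_fst (𝕜 := ℝ) (p := ε t)).comp_hasDerivWithinAt t hε
  have hsnd {ε : ℝ → 𝔸 × 𝔸} (hε : HasDerivWithinAt ε (hillField q t (ε t)) S t) :
      HasDerivWithinAt (fun s ↦ (ε s).2) (-(q t * (ε t).1)) S t :=
    (hasFDerivAt_snd (𝕜 := ℝ) (p := ε t)).comp_hasDerivWithinAt t hε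
  refine (((hfst hγ).mul (hsnd hδ)).sub ((hsnd hγ).mul (hfst hδ))).congr_deriv ?_
  ring

theorem wronskian_eq_of_isIntegralCurveOn_hillField {S : Set ℝ} (hS : Convex ℝ S)
    (hγ : IsIntegralCurveOn γ (hillField q) S) (hδ : IsIntegralCurveOn δ (hillField q) S)
    {s t : ℝ} (hs : s ∈ S) (ht : t ∈ S) :
    wronskian (γ s) (δ s) = wronskian (γ t) (δ t) := by
  have hle := hS.norm_image_sub_le_of_norm_hasDerivWithin_le (C := 0)
    (fun r hr ↦ hasDerivWithinAt_wronskian_hillField (hγ r hr) (hδ r hr))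
    (fun _ _ ↦ norm_zero.le) ht hs
  rwa [zero_mul, norm_le_zero_iff, sub_eq_zero] at hle

theorem eqOn_zero_of_neumann_of_snd_ne_zero [NoZeroDivisors 𝔸] {c σ : ℝ}
    (hq : ContinuousOn q (Icc c σ))
    (hγ : IsIntegralCurveOn γ (hillField q) (Icc c σ)) (hγc : (γ c).2 = 0) (hγσ : (γ σ).2 = 0)
    (hδ : IsIntegralCurveOn δ (hillField q) (Icc c σ)) (hδc : (δ c).2 = 0) (hδσ : (δ σ).2 ≠ 0) :
    EqOn γ 0 (Icc c σ) := by
  intro t ht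
  have hcσ : c ≤ σ := ht.1.trans ht.2
  have hW : wronskian (γ σ) (δ σ) = wronskian (γ c) (δ c) :=
    wronskian_eq_of_isIntegralCurveOn_hillField (convex_Icc c σ) hγ hδ
      (right_mem_Icc.2 hcσ) (left_mem_Icc.2 hcσ)
  have hmul : (γ σ).1 * (δ σ).2 = 0 := by simpa [wronskian, hγc, hγσ, hδc] using hW
  have hσ : γ σ = 0 := Prod.ext ((mul_eq_zero.1 hmul).resolve_right hδσ) hγσ
  exact eqOn_of_isIntegralCurveOn_hillField_of_eq_right hq hγ
    (isIntegralCurveOn_zero_hillField q _) hσ ht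

end NormedCommRing

end Hill

theorem stmt_11 (a b : ℝ) (hab : a < b) (V : ℝ → ℝ) (hV : ContDiff ℝ 2 V)
    (θ θ' θ'' : ℝ → ℝ)
    (hθ1 : ∀ s ∈ Set.Icc a b, HasDerivAt θ (θ' s) s)
    (hθ2 : ∀ s ∈ Set.Icc a b, HasDerivAt θ' (θ'' s) s)
    (hθc : ContinuousOn θ'' (Set.Icc a b))
    (hEL : ∀ s ∈ Set.Icc a b, θ'' s + deriv V (θ s) = 0)
    (hnosim : ∀ s ∈ Set.Icc a b, ¬(θ' s = 0 ∧ deriv V (θ s) = 0))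
    (c : ℝ) (hc : c ∈ Set.Ioo a b) (hVc : deriv V (θ c) = 0) :
    ∀ σ ∈ Set.Ioc c b,
      ((∃ τ τ' τ'' : ℝ → ℝ,
          (∀ s ∈ Set.Icc c σ, HasDerivAt τ (τ' s) s) ∧
          (∀ s ∈ Set.Icc c σ, HasDerivAt τ' (τ'' s) s) ∧
          ContinuousOn τ'' (Set.Icc c σ) ∧
          (∀ s ∈ Set.Icc c σ, -τ'' s - deriv (deriv V) (θ s) * τ s = 0) ∧
          τ' c = 0 ∧ τ' σ = 0 ∧
          (∃ s ∈ Set.Icc c σ, τ s ≠ 0)) ↔ deriv V (θ σ) = 0) := by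
  intro σ hσ
  have hsub : Set.Icc c σ ⊆ Set.Icc a b := Set.Icc_subset_Icc hc.1.le hσ.2
  have hV' : ContDiff ℝ 1 (deriv V) := hV.deriv'
  let q : ℝ → ℝ := fun s ↦ deriv (deriv V) (θ s)
  have hq : ContinuousOn q (Set.Icc c σ) := (hV'.continuous_deriv le_rfl).comp_continuousOn
    (HasDerivAt.continuousOn fun s hs ↦ hθ1 s (hsub hs))
  have hθ' : ∀ s ∈ Set.Icc c σ, HasDerivAt θ' (-deriv V (θ s)) s := fun s hs ↦
    (hθ2 s (hsub hs)).congr_deriv (eq_neg_of_add_eq_zero_left (hEL s (hsub hs)))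
  have hθ'' : ∀ s ∈ Set.Icc c σ, HasDerivAt (fun s ↦ -deriv V (θ s)) (-(q s * θ' s)) s :=
    fun s hs ↦ ((hV'.differentiable one_ne_zero (θ s)).hasDerivAt.comp s (hθ1 s (hsub hs))).neg
  constructor
  · rintro ⟨τ, τ', τ'', hτ, hτ', -, hJ, hτc, hτσ, s, hs, hne⟩
    by_contra hcrit
    have hτcurve : IsIntegralCurveOn (fun s ↦ (τ s, τ' s)) (hillField q) (Set.Icc c σ) := fun s hs ↦
      ((hτ s hs).prodMk ((hτ' s hs).congr_deriv (by linarith [hJ s hs]))).hasDerivWithinAt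
    exact hne <| congrArg Prod.fst <| eqOn_zero_of_neumann_of_snd_ne_zero hq hτcurve hτc hτσ
      (fun s hs ↦ ((hθ' s hs).prodMk (hθ'' s hs)).hasDerivWithinAt)
      (neg_eq_zero.2 hVc) (neg_ne_zero.2 hcrit) hs
  · intro hcrit
    have hcmem : c ∈ Set.Icc c σ := Set.left_mem_Icc.2 hσ.1.le
    exact ⟨θ', fun s ↦ -deriv V (θ s), fun s ↦ -(q s * θ' s), hθ', hθ'',
      (hq.mul (HasDerivAt.continuousOn hθ')).neg, fun s _ ↦ by ring, neg_eq_zero.2 hVc,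
      neg_eq_zero.2 hcrit, c, hcmem, fun h ↦ hnosim c (hsub hcmem) ⟨h, hVc⟩⟩
end

section
/- Let f : [a,b] → ℝ be continuous and let c ∈ (a,b). For real numbers x < y in [a,b] and τ ∈ C¹([x,y],ℝ) write K_{[x,y]}[τ] = ∫_x^y (τ'(s)² + f(s)·τ(s)²) ds. Suppose there exist τ₁ ∈ C¹([a,c],ℝ), not identically zero, with τ₁'(a) = τ₁'(c) = 0 and K_{[a,c]}[τ₁] < 0, and τ₂ ∈ C¹([c,b],ℝ), not identically zero, with τ₂'(c) = τ₂'(b) = 0 and K_{[c,b]}[τ₂] < 0. Then there exists τ ∈ C¹([a,b],ℝ), not identically zero, with τ'(a) = τ'(b) = 0 and K_{[a,b]}[τ] < 0. -/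
/-!
Rescale the two given functions by factors `α`, `β`, not both zero, so that their values at `c`
agree. Their derivatives both vanish at `c`, so the two pieces join to a `C¹` function on `[a, b]`,
which still satisfies the Neumann conditions at `a` and `b`. The functional is additive over
adjacent intervals and quadratic, so its value is `α² K₁ + β² K₂ < 0`.
-/

open Set MeasureTheory

section Piecewise

lemma eqOn_piecewise_Iic_Ici {X β : Type*} [LinearOrder X] {c : X} {u v : X → β}
    (huv : u c = v c) : EqOn ((Iic c).piecewise u v) v (Ici c) := by
  intro s hs
  rcases eq_or_lt_of_le (mem_Ici.1 hs) with rfl | hcs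
  · rw [piecewise_eq_of_mem _ _ _ self_mem_Iic, huv]
  · exact piecewise_eq_of_notMem _ _ _ (notMem_Iic.2 hcs)

lemma continuousOn_piecewise_Iic {X β : Type*} [LinearOrder X] [TopologicalSpace X]
    [OrderClosedTopology X] [TopologicalSpace β] {a b c : X} {u v : X → β} (huv : u c = v c)
    (hu : ContinuousOn u (Icc a c)) (hv : ContinuousOn v (Icc c b)) :
    ContinuousOn ((Iic c).piecewise u v) (Icc a b) := by
  refine ContinuousOn.mono ?_ (Icc_subset_Icc_union_Icc (b := c))
  refine ContinuousOn.union_of_isClosed ?_ ?_ isClosed_Icc isClosed_Icc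
  · exact hu.congr ((piecewise_eqOn _ u v).mono Icc_subset_Iic_self)
  · exact hv.congr ((eqOn_piecewise_Iic_Ici huv).mono Icc_subset_Ici_self)

variable {E : Type*} [NormedAddCommGroup E] [NormedSpace ℝ E] {a b c : ℝ}

lemma hasDerivAt_piecewise_Iic {u v u' v' : ℝ → E} {s : ℝ} (huv : u c = v c) (huv' : u' c = v' c)
    (hu : s ≤ c → HasDerivWithinAt u (u' s) (Iic c) s)
    (hv : c ≤ s → HasDerivWithinAt v (v' s) (Ici c) s) :
    HasDerivAt ((Iic c).piecewise u v) ((Iic c).piecewise u' v' s) s := by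
  have hleft : HasDerivWithinAt ((Iic c).piecewise u v) ((Iic c).piecewise u' v' s) (Iic c) s := by
    by_cases hs : s ∈ Iic c
    · rw [piecewise_eq_of_mem _ _ _ hs]
      exact (hu hs).congr_of_mem (piecewise_eqOn _ u v) hs
    · exact HasFDerivWithinAt.of_notMem_closure (by rwa [closure_Iic])
  have hright : HasDerivWithinAt ((Iic c).piecewise u v) ((Iic c).piecewise u' v' s) (Ici c) s := by
    by_cases hs : s ∈ Ici c
    · rw [eqOn_piecewise_Iic_Ici huv' hs]
      exact (hv hs).congr_of_mem (eqOn_piecewise_Iic_Ici huv) hs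
    · exact HasFDerivWithinAt.of_notMem_closure (by rwa [closure_Ici])
  simpa only [Iic_union_Ici, hasDerivWithinAt_univ] using hleft.union hright

lemma integral_piecewise_Iic {μ : Measure ℝ} {u v : ℝ → E} (hac : a ≤ c) (hcb : c ≤ b)
    (hu : IntervalIntegrable u μ a c) (hv : IntervalIntegrable v μ c b) :
    ∫ s in a..b, (Iic c).piecewise u v s ∂μ = (∫ s in a..c, u s ∂μ) + ∫ s in c..b, v s ∂μ := by
  have hleft : EqOn u ((Iic c).piecewise u v) (uIoc a c) := fun s hs => by
    rw [uIoc_of_le hac] at hs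
    exact (piecewise_eqOn (Iic c) u v hs.2).symm
  have hright : EqOn v ((Iic c).piecewise u v) (uIoc c b) := fun s hs => by
    rw [uIoc_of_le hcb] at hs
    exact (piecewise_eqOn_compl (Iic c) u v (notMem_Iic.2 hs.1)).symm
  rw [← intervalIntegral.integral_add_adjacent_intervals (hu.congr hleft) (hv.congr hright),
    intervalIntegral.integral_congr_ae (.of_forall hleft),
    intervalIntegral.integral_congr_ae (.of_forall hright)]

end Piecewise

/-- `IsNeumannPair τ τ' a b` says that `τ` is a `C¹` function on `[a, b]` with derivative `τ'` and
satisfies the Neumann conditions `τ' a = τ' b = 0`: these are the functions on which the energy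
is tested. The derivative is two-sided also at the endpoints. -/
structure IsNeumannPair {E : Type*} [NormedAddCommGroup E] [NormedSpace ℝ E] (τ τ' : ℝ → E)
    (a b : ℝ) : Prop where
  hasDerivAt : ∀ s ∈ Icc a b, HasDerivAt τ (τ' s) s
  continuousOn : ContinuousOn τ' (Icc a b)
  deriv_left : τ' a = 0
  deriv_right : τ' b = 0

namespace IsNeumannPair

variable {E : Type*} [NormedAddCommGroup E] [NormedSpace ℝ E] {τ τ' τ₁ τ₁' τ₂ τ₂' : ℝ → E}
  {a b c : ℝ}

lemma const_smul (h : IsNeumannPair τ τ' a b) (α : ℝ) : IsNeumannPair (α • τ) (α • τ') a b where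
  hasDerivAt s hs := (h.hasDerivAt s hs).const_smul α
  continuousOn := h.continuousOn.const_smul α
  deriv_left := by rw [Pi.smul_apply, h.deriv_left, smul_zero]
  deriv_right := by rw [Pi.smul_apply, h.deriv_right, smul_zero]

lemma piecewise_Iic (h₁ : IsNeumannPair τ₁ τ₁' a c) (h₂ : IsNeumannPair τ₂ τ₂' c b)
    (hac : a ≤ c) (hcb : c ≤ b) (hτ : τ₁ c = τ₂ c) :
    IsNeumannPair ((Iic c).piecewise τ₁ τ₂) ((Iic c).piecewise τ₁' τ₂') a b := by
  have hτ' : τ₁' c = τ₂' c := h₁.deriv_right.trans h₂.deriv_left.symm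
  refine ⟨fun s hs => ?_, continuousOn_piecewise_Iic hτ' h₁.continuousOn h₂.continuousOn, ?_, ?_⟩
  · exact hasDerivAt_piecewise_Iic hτ hτ'
      (fun hsc => (h₁.hasDerivAt s ⟨hs.1, hsc⟩).hasDerivWithinAt)
      (fun hcs => (h₂.hasDerivAt s ⟨hcs, hs.2⟩).hasDerivWithinAt)
  · rw [piecewise_eq_of_mem _ _ _ (mem_Iic.2 hac), h₁.deriv_left]
  · rw [eqOn_piecewise_Iic_Ici hτ' (mem_Ici.2 hcb), h₂.deriv_right]

end IsNeumannPair

/-- The integrand `τ'² + f τ²` of the functional `K`. The derivative `τ'` is a separate argument,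
so that no differentiability is needed to define it. -/
def energyDensity (f τ τ' : ℝ → ℝ) (s : ℝ) : ℝ :=
  τ' s ^ 2 + f s * τ s ^ 2

/-- The functional `K_{[x,y]}[τ]`, the quadratic form of the operator `-d²/ds² + f`. It takes the
junk value `0` if the integrand is not integrable. -/
noncomputable def energy (f τ τ' : ℝ → ℝ) (x y : ℝ) : ℝ :=
  ∫ s in x..y, energyDensity f τ τ' s

section Energy

variable {f τ τ' τ₁ τ₁' τ₂ τ₂' : ℝ → ℝ} {a b c : ℝ}

lemma energyDensity_smul (α : ℝ) :
    energyDensity f (α • τ) (α • τ') = α ^ 2 • energyDensity f τ τ' := by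
  ext s
  simp only [energyDensity, Pi.smul_apply, smul_eq_mul]
  ring

lemma energy_smul (α : ℝ) : energy f (α • τ) (α • τ') a b = α ^ 2 * energy f τ τ' a b := by
  rw [energy, energyDensity_smul]
  exact intervalIntegral.integral_const_mul _ _

-- Integrals of non-integrable functions are `0`, so a nonzero energy is an honest integral.
lemma intervalIntegrable_energyDensity_smul (α : ℝ) (hK : energy f τ τ' a b ≠ 0) :
    IntervalIntegrable (energyDensity f (α • τ) (α • τ')) volume a b := by
  rw [energyDensity_smul]
  exact (intervalIntegral.intervalIntegrable_of_integral_ne_zero hK).const_mul _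

lemma energyDensity_piecewise (t : Set ℝ) [∀ s, Decidable (s ∈ t)] :
    energyDensity f (t.piecewise τ₁ τ₂) (t.piecewise τ₁' τ₂') =
      t.piecewise (energyDensity f τ₁ τ₁') (energyDensity f τ₂ τ₂') :=
  (t.piecewise_op₂ τ₁ τ₂ τ₁' τ₂' fun s x x' => x' ^ 2 + f s * x ^ 2).symm

lemma energy_piecewise_Iic (hac : a ≤ c) (hcb : c ≤ b)
    (h₁ : IntervalIntegrable (energyDensity f τ₁ τ₁') volume a c)
    (h₂ : IntervalIntegrable (energyDensity f τ₂ τ₂') volume c b) :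
    energy f ((Iic c).piecewise τ₁ τ₂) ((Iic c).piecewise τ₁' τ₂') a b =
      energy f τ₁ τ₁' a c + energy f τ₂ τ₂' c b := by
  rw [energy, energyDensity_piecewise]
  exact integral_piecewise_Iic hac hcb h₁ h₂

lemma exists_ne_zero_of_energy_ne_zero (hab : a ≤ b)
    (hτ : ∀ s ∈ Ioo a b, HasDerivAt τ (τ' s) s) (hK : energy f τ τ' a b ≠ 0) :
    ∃ s ∈ Ioo a b, τ s ≠ 0 := by
  by_contra! hzero
  have hzero' : ∀ s ∈ Ioo a b, τ' s = 0 := fun s hs =>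
    (hτ s hs).unique <| (hasDerivAt_const s 0).congr_of_eventuallyEq <|
      Filter.eventually_of_mem (Ioo_mem_nhds hs.1 hs.2) hzero
  have hdensity : EqOn (energyDensity f τ τ') 0 (Ioo a b) := fun s hs => by
    simp only [energyDensity, hzero s hs, hzero' s hs, Pi.zero_apply]
    ring
  refine hK ?_
  rw [energy, intervalIntegral.integral_congr_Ioo_of_le hab hdensity]
  exact intervalIntegral.integral_zero

end Energy

theorem stmt_12_general {a b c : ℝ} (hac : a ≤ c) (hcb : c ≤ b) {f τ₁ τ₁' τ₂ τ₂' : ℝ → ℝ}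
    (h₁ : IsNeumannPair τ₁ τ₁' a c) (hK₁ : energy f τ₁ τ₁' a c < 0)
    (h₂ : IsNeumannPair τ₂ τ₂' c b) (hK₂ : energy f τ₂ τ₂' c b < 0) :
    ∃ τ τ' : ℝ → ℝ, IsNeumannPair τ τ' a b ∧ (∃ s ∈ Icc a b, τ s ≠ 0) ∧
      energy f τ τ' a b < 0 := by
  obtain ⟨α, β, hαβ, hmatch⟩ : ∃ α β : ℝ, (α ≠ 0 ∨ β ≠ 0) ∧ α * τ₁ c = β * τ₂ c := by
    by_cases h : τ₁ c = 0
    · exact ⟨1, 0, .inl one_ne_zero, by rw [h, mul_zero, zero_mul]⟩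
    · exact ⟨τ₂ c, τ₁ c, .inr h, mul_comm _ _⟩
  have hτ := (h₁.const_smul α).piecewise_Iic (h₂.const_smul β) hac hcb hmatch
  have hneg : α ^ 2 * energy f τ₁ τ₁' a c + β ^ 2 * energy f τ₂ τ₂' c b < 0 := by
    rcases hαβ with hα | hβ
    · exact add_neg_of_neg_of_nonpos (mul_neg_of_pos_of_neg (by positivity) hK₁)
        (mul_nonpos_of_nonneg_of_nonpos (sq_nonneg β) hK₂.le)
    · exact add_neg_of_nonpos_of_neg (mul_nonpos_of_nonneg_of_nonpos (sq_nonneg α) hK₁.le)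
        (mul_neg_of_pos_of_neg (by positivity) hK₂)
  rw [← energy_smul, ← energy_smul, ← energy_piecewise_Iic hac hcb
    (intervalIntegrable_energyDensity_smul α hK₁.ne)
    (intervalIntegrable_energyDensity_smul β hK₂.ne)] at hneg
  obtain ⟨s, hs, hs₀⟩ := exists_ne_zero_of_energy_ne_zero (hac.trans hcb)
    (fun s hs => hτ.hasDerivAt s (Ioo_subset_Icc_self hs)) hneg.ne
  exact ⟨_, _, hτ, ⟨s, Ioo_subset_Icc_self hs, hs₀⟩, hneg⟩

theorem stmt_12 (a b : ℝ) (hab : a < b) (f : ℝ → ℝ)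
    (hf : ContinuousOn f (Set.Icc a b))
    (c : ℝ) (hc : c ∈ Set.Ioo a b)
    (τ₁ τ₁' : ℝ → ℝ)
    (hτ₁ : ∀ s ∈ Set.Icc a c, HasDerivAt τ₁ (τ₁' s) s)
    (hτ₁c : ContinuousOn τ₁' (Set.Icc a c))
    (hτ₁nz : ∃ s ∈ Set.Icc a c, τ₁ s ≠ 0)
    (hτ₁a : τ₁' a = 0) (hτ₁b : τ₁' c = 0)
    (hK₁ : (∫ s in a..c, (τ₁' s ^ 2 + f s * τ₁ s ^ 2)) < 0)
    (τ₂ τ₂' : ℝ → ℝ)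
    (hτ₂ : ∀ s ∈ Set.Icc c b, HasDerivAt τ₂ (τ₂' s) s)
    (hτ₂c : ContinuousOn τ₂' (Set.Icc c b))
    (hτ₂nz : ∃ s ∈ Set.Icc c b, τ₂ s ≠ 0)
    (hτ₂a : τ₂' c = 0) (hτ₂b : τ₂' b = 0)
    (hK₂ : (∫ s in c..b, (τ₂' s ^ 2 + f s * τ₂ s ^ 2)) < 0) :
    ∃ τ τ' : ℝ → ℝ,
      (∀ s ∈ Set.Icc a b, HasDerivAt τ (τ' s) s) ∧
      ContinuousOn τ' (Set.Icc a b) ∧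
      (∃ s ∈ Set.Icc a b, τ s ≠ 0) ∧
      τ' a = 0 ∧ τ' b = 0 ∧
      (∫ s in a..b, (τ' s ^ 2 + f s * τ s ^ 2)) < 0 := by
  obtain ⟨τ, τ', hτ, hnz, hK⟩ := stmt_12_general hc.1.le hc.2.le
    ⟨hτ₁, hτ₁c, hτ₁a, hτ₁b⟩ hK₁ ⟨hτ₂, hτ₂c, hτ₂a, hτ₂b⟩ hK₂
  exact ⟨τ, τ', hτ.hasDerivAt, hτ.continuousOn, hnz, hτ.deriv_left, hτ.deriv_right, hK⟩
end
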